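/- arXiv:1810.05707 — 2 statements merged into one kernel-verified Lean document; each statement's English description precedes it below -/
import Mathlib

section
/- Fix 1 < p < ∞, natural numbers l_1,…,l_{d+1}, and let T be the (l_1,…,l_{d+1}) interval tree with levels Λ_0,…,Λ_{d+1}. Suppose 0 < Δ, ν < 1, λ, Θ > 0, M > 1, and (r_I)_{I∈T}, (s_I)_{I∈T} ⊂ [0,∞) are such that (i) r_I ≤ λ·s_I for each I ∈ T; (ii) r_I ≤ ∑_{J⁻=I} r_J and s_I ≤ ∑_{J⁻=I} s_J for each I ∈ T \ Λ_{d+1}; (iii) max_{I∈Λ_j} s_I ≤ M·min_{I∈Λ_j} s_I for all 0 ≤ j ≤ d; (iv) Δ·M^p ≤ ν·Θ^p/(2λ^p); and (v) r_{[L]}^p > (1−ν/2)·Θ^p·(∏_{i=1}^{d+1} l_i^{p−1})·∑_{I∈Λ_{d+1}} s_I^p. Then for every 0 ≤ j < d, |{I ∈ Λ_j : r_I^p ≤ (1−ν)·Θ^p·l_{j+1}^{p−1}·∑_{J⁻=I} s_J^p}| < (1−Δ)·|Λ_j|. -/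
/-!
For a nonnegative family `x` with `x_I ≤ ∑_{J⁻ = I} x_J`, Hölder's inequality on the children of
each node shows that the normalized sums `(∏_{i ≤ j} l_i ^ (p-1)) ∑_{I ∈ Λ_j} x_I ^ p` are
nondecreasing in `j`. Moving down from the root with `r` and up from the leaves with `s`, hypothesis
(v) therefore yields `(1 - ν/2) B < ∑_{I ∈ Λ_j} r_I ^ p`, where
`B = Θ^p l_{j+1}^(p-1) ∑_{J ∈ Λ_{j+1}} s_J ^ p`. If at least `(1-Δ)|Λ_j|` of the nodes `I ∈ Λ_j`
satisfied `r_I ^ p ≤ (1-ν) Θ^p l_{j+1}^(p-1) ∑_{J⁻ = I} s_J ^ p`, these would contribute at most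
`(1-ν) B` to the sum on the right. The other nodes have proportion at most `Δ`, and by (i) and (iii)
`r_I ≤ λ M s_{I'}` throughout the level, so by (iv) they would contribute at most `(ν/2) B`, a
contradiction.
-/

open Finset

noncomputable section

/-!
The `(l 1, …, l (d+1))` interval tree is encoded as follows: the nodes at level `j`
(for `0 ≤ j ≤ d+1`) are indexed by the natural numbers `k < levN l j`, where
`levN l j = l 1 * ⋯ * l j` is the cardinality of the `j`-th level `Λ_j`.  The children of the
node `k` at level `j` are the nodes `k * l (j+1) + t`, `t < l (j+1)`, at level `j+1`, and the
root (the interval `[L]`) is the node `0` at level `0`.  A family `(x_I)_{I ∈ T}` of reals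
indexed by the tree is encoded as `x : ℕ → ℕ → ℝ`, with `x j k` the value at node `k` of
level `j`.
-/

/-- Cardinality of the `j`-th level `Λ_j` of the interval tree. -/
def levN (l : ℕ → ℕ) (j : ℕ) : ℕ := ∏ i ∈ Finset.Icc 1 j, l i

/-- `∑_{J⁻ = I} x_J`, the sum of `x` over the children of node `k` at level `j`. -/
def childSum (l : ℕ → ℕ) (x : ℕ → ℕ → ℝ) (j k : ℕ) : ℝ :=
  ∑ t ∈ Finset.range (l (j + 1)), x (j + 1) (k * l (j + 1) + t)

/-- `∑_{J⁻ = I} x_J ^ p`, the sum of `x^p` over the children of node `k` at level `j`. -/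
def childSumPow (l : ℕ → ℕ) (x : ℕ → ℕ → ℝ) (p : ℝ) (j k : ℕ) : ℝ :=
  ∑ t ∈ Finset.range (l (j + 1)), x (j + 1) (k * l (j + 1) + t) ^ p

/-- The families `(x_I)` on the tree to which the Hölder monotonicity applies: nonnegative, with
each value above the last level `d + 1` at most the sum of the values at the children. -/
structure ChildDominated (l : ℕ → ℕ) (d : ℕ) (x : ℕ → ℕ → ℝ) : Prop where
  nonneg : ∀ j ≤ d + 1, ∀ k < levN l j, 0 ≤ x j k
  le_childSum : ∀ j ≤ d, ∀ k < levN l j, x j k ≤ childSum l x j k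

/-- `∑_{I ∈ Λ_j} x_I ^ p`, the level analogue of `childSumPow`. -/
def levelSumPow (l : ℕ → ℕ) (x : ℕ → ℕ → ℝ) (p : ℝ) (j : ℕ) : ℝ :=
  ∑ k ∈ range (levN l j), x j k ^ p

/-- The normalizing factor `∏_{i ≤ j} l_i ^ (p-1) = |Λ_j| ^ (p-1)` of the sum over level `j`, kept
as a product because hypothesis (v) and the step from `j` to `j + 1` have this shape. -/
def levelWeight (l : ℕ → ℕ) (p : ℝ) (j : ℕ) : ℝ :=
  ∏ i ∈ Icc 1 j, (l i : ℝ) ^ (p - 1)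

section FiniteSums

variable {ι 𝕜 : Type*} [CommRing 𝕜] [LinearOrder 𝕜] [IsStrictOrderedRing 𝕜] {s t : Finset ι}

lemma card_mul_sum_le_card_mul_sum {f g : ι → 𝕜} (h : ∀ i ∈ t, ∀ k ∈ s, f i ≤ g k) :
    (#s : 𝕜) * ∑ i ∈ t, f i ≤ #t * ∑ k ∈ s, g k := by
  calc (#s : 𝕜) * ∑ i ∈ t, f i = ∑ i ∈ t, ∑ _k ∈ s, f i := by
        simp only [mul_sum, sum_const, nsmul_eq_mul]
    _ ≤ ∑ _i ∈ t, ∑ k ∈ s, g k := sum_le_sum fun i hi ↦ sum_le_sum (h i hi)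
    _ = #t * ∑ k ∈ s, g k := by rw [sum_const, nsmul_eq_mul]

lemma sum_le_mul_sum_of_card_le {f g : ι → 𝕜} {δ : 𝕜} (hts : t ⊆ s) (hg : 0 ≤ ∑ k ∈ s, g k)
    (h : ∀ i ∈ t, ∀ k ∈ s, f i ≤ g k) (hcard : (#t : 𝕜) ≤ δ * #s) :
    ∑ i ∈ t, f i ≤ δ * ∑ k ∈ s, g k := by
  obtain rfl | hs := s.eq_empty_or_nonempty
  · simp [subset_empty.1 hts]
  · refine le_of_mul_le_mul_left ?_ (Nat.cast_pos.2 hs.card_pos : (0 : 𝕜) < #s)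
    calc (#s : 𝕜) * ∑ i ∈ t, f i ≤ #t * ∑ k ∈ s, g k := card_mul_sum_le_card_mul_sum h
      _ ≤ δ * #s * ∑ k ∈ s, g k := by gcongr
      _ = #s * (δ * ∑ k ∈ s, g k) := by ring

lemma card_filter_le_lt_of_sum_add_lt_sum {f g w : ι → 𝕜} {δ : 𝕜} (hw : ∀ i ∈ s, 0 ≤ w i)
    (hg : 0 ≤ ∑ k ∈ s, g k) (hfg : ∀ i ∈ s, ∀ k ∈ s, f i ≤ g k)
    (hsum : ∑ i ∈ s, w i + δ * ∑ k ∈ s, g k < ∑ i ∈ s, f i) :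
    (#{i ∈ s | f i ≤ w i} : 𝕜) < (1 - δ) * #s := by
  by_contra! hmany
  have hfew : (#{i ∈ s | ¬ f i ≤ w i} : 𝕜) ≤ δ * #s := by
    have hsplit : (#{i ∈ s | f i ≤ w i} : 𝕜) + #{i ∈ s | ¬ f i ≤ w i} = #s := by
      rw [← Nat.cast_add, card_filter_add_card_filter_not]
    linarith
  refine hsum.not_ge ?_
  calc ∑ i ∈ s, f i
      = ∑ i ∈ s with f i ≤ w i, f i + ∑ i ∈ s with ¬ f i ≤ w i, f i :=
        (sum_filter_add_sum_filter_not s _ f).symm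
    _ ≤ ∑ i ∈ s with f i ≤ w i, w i + δ * ∑ k ∈ s, g k :=
        add_le_add (sum_le_sum fun i hi ↦ (mem_filter.1 hi).2)
          (sum_le_mul_sum_of_card_le (filter_subset _ s) hg
            (fun i hi ↦ hfg i (mem_filter.1 hi).1) hfew)
    _ ≤ ∑ i ∈ s, w i + δ * ∑ k ∈ s, g k := by
        gcongr
        · exact fun i hi _ ↦ hw i hi
        · exact filter_subset _ s

end FiniteSums

lemma sum_range_sum_range_mul_add {R : Type*} [AddCommMonoid R] (f : ℕ → R) (n m : ℕ) :
    ∑ k ∈ range n, ∑ t ∈ range m, f (k * m + t) = ∑ k ∈ range (n * m), f k := by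
  induction n with
  | zero => simp
  | succ n ih => rw [sum_range_succ, ih, Nat.succ_mul, sum_range_add]

lemma rpow_le_mul_rpow_of_le_mul_of_le_mul {a b c α β p : ℝ} (ha : 0 ≤ a) (hc : 0 ≤ c)
    (hα : 0 ≤ α) (hβ : 0 ≤ β) (hp : 0 ≤ p) (hab : a ≤ α * b) (hbc : b ≤ β * c) :
    a ^ p ≤ (α * β) ^ p * c ^ p := by
  rw [← Real.mul_rpow (mul_nonneg hα hβ) hc, mul_assoc]
  exact Real.rpow_le_rpow ha (hab.trans (mul_le_mul_of_nonneg_left hbc hα)) hp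

section IntervalTree

variable {l : ℕ → ℕ} {x : ℕ → ℕ → ℝ} {p : ℝ} {d j k t : ℕ}

lemma levN_succ (l : ℕ → ℕ) (j : ℕ) : levN l (j + 1) = levN l j * l (j + 1) :=
  prod_Icc_succ_top (by lia) l

lemma levelWeight_succ (l : ℕ → ℕ) (p : ℝ) (j : ℕ) :
    levelWeight l p (j + 1) = levelWeight l p j * (l (j + 1) : ℝ) ^ (p - 1) :=
  prod_Icc_succ_top (by lia) _

lemma levelWeight_nonneg (l : ℕ → ℕ) (p : ℝ) (j : ℕ) : 0 ≤ levelWeight l p j :=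
  prod_nonneg fun _ _ ↦ by positivity

lemma levelWeight_zero_mul_levelSumPow_zero (l : ℕ → ℕ) (x : ℕ → ℕ → ℝ) (p : ℝ) :
    levelWeight l p 0 * levelSumPow l x p 0 = x 0 0 ^ p := by
  simp [levelWeight, levelSumPow, levN]

lemma child_lt_levN_succ (hk : k < levN l j) (ht : t < l (j + 1)) :
    k * l (j + 1) + t < levN l (j + 1) := by
  rw [levN_succ]
  calc k * l (j + 1) + t < (k + 1) * l (j + 1) := by lia
    _ ≤ levN l j * l (j + 1) := Nat.mul_le_mul_right _ hk

lemma sum_childSumPow (l : ℕ → ℕ) (x : ℕ → ℕ → ℝ) (p : ℝ) (j : ℕ) :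
    ∑ k ∈ range (levN l j), childSumPow l x p j k = levelSumPow l x p (j + 1) := by
  simp only [childSumPow, levelSumPow, levN_succ, ← sum_range_sum_range_mul_add]

lemma childSumPow_nonneg (hx : ∀ k < levN l (j + 1), 0 ≤ x (j + 1) k) (hk : k < levN l j) :
    0 ≤ childSumPow l x p j k :=
  sum_nonneg fun _ ht ↦ Real.rpow_nonneg (hx _ (child_lt_levN_succ hk (mem_range.1 ht))) p

lemma childSum_rpow_le (hp : 1 ≤ p) (hx : ∀ k < levN l (j + 1), 0 ≤ x (j + 1) k)
    (hk : k < levN l j) :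
    childSum l x j k ^ p ≤ (l (j + 1) : ℝ) ^ (p - 1) * childSumPow l x p j k := by
  simpa only [childSum, childSumPow, card_range] using
    Real.rpow_sum_le_const_mul_sum_rpow_of_nonneg (range (l (j + 1))) hp
      fun t ht ↦ hx _ (child_lt_levN_succ hk (mem_range.1 ht))

namespace ChildDominated

lemma levelSumPow_nonneg (hx : ChildDominated l d x) (hj : j ≤ d + 1) :
    0 ≤ levelSumPow l x p j :=
  sum_nonneg fun k hk ↦ Real.rpow_nonneg (hx.nonneg j hj k (mem_range.1 hk)) p

lemma levelSumPow_le_succ (hp : 1 ≤ p) (hx : ChildDominated l d x) (hj : j ≤ d) :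
    levelSumPow l x p j ≤ (l (j + 1) : ℝ) ^ (p - 1) * levelSumPow l x p (j + 1) := by
  rw [← sum_childSumPow, mul_sum]
  refine sum_le_sum fun k hk ↦ ?_
  have hk := mem_range.1 hk
  calc x j k ^ p ≤ childSum l x j k ^ p :=
        Real.rpow_le_rpow (hx.nonneg j (by lia) k hk) (hx.le_childSum j hj k hk) (by linarith)
    _ ≤ (l (j + 1) : ℝ) ^ (p - 1) * childSumPow l x p j k :=
        childSum_rpow_le hp (hx.nonneg (j + 1) (by lia)) hk

lemma monotoneOn_levelWeight_mul_levelSumPow (hp : 1 ≤ p) (hx : ChildDominated l d x) :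
    MonotoneOn (fun j ↦ levelWeight l p j * levelSumPow l x p j) (Set.Iic (d + 1)) := by
  refine monotoneOn_of_le_add_one Set.ordConnected_Iic fun j _ _ hj ↦ ?_
  rw [levelWeight_succ, mul_assoc]
  exact mul_le_mul_of_nonneg_left (hx.levelSumPow_le_succ hp (Nat.succ_le_succ_iff.1 hj))
    (levelWeight_nonneg l p j)

lemma lt_levelSumPow_of_lt_root {r s : ℕ → ℕ → ℝ} {C : ℝ} (hp : 1 ≤ p)
    (hr : ChildDominated l d r) (hs : ChildDominated l d s) (hC : 0 ≤ C) (hj : j ≤ d)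
    (hroot : C * levelWeight l p (d + 1) * levelSumPow l s p (d + 1) < r 0 0 ^ p) :
    C * (l (j + 1) : ℝ) ^ (p - 1) * levelSumPow l s p (j + 1) < levelSumPow l r p j := by
  refine lt_of_mul_lt_mul_left ?_ (levelWeight_nonneg l p j)
  calc levelWeight l p j * (C * (l (j + 1) : ℝ) ^ (p - 1) * levelSumPow l s p (j + 1))
      = C * (levelWeight l p (j + 1) * levelSumPow l s p (j + 1)) := by
        rw [levelWeight_succ]
        ring
    _ ≤ C * (levelWeight l p (d + 1) * levelSumPow l s p (d + 1)) :=
        mul_le_mul_of_nonneg_left (hs.monotoneOn_levelWeight_mul_levelSumPow hp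
          (Set.mem_Iic.2 (by lia)) Set.self_mem_Iic (by lia)) hC
    _ < r 0 0 ^ p := by rwa [← mul_assoc]
    _ = levelWeight l p 0 * levelSumPow l r p 0 :=
        (levelWeight_zero_mul_levelSumPow_zero l r p).symm
    _ ≤ levelWeight l p j * levelSumPow l r p j :=
        hr.monotoneOn_levelWeight_mul_levelSumPow hp
          (Set.mem_Iic.2 (by lia)) (Set.mem_Iic.2 (by lia)) j.zero_le

end ChildDominated

end IntervalTree

theorem YtoX_lemma_general {p : ℝ} (hp : 1 ≤ p) {d : ℕ} {l : ℕ → ℕ} {Δ ν : ℝ} (hΔ : 0 ≤ Δ)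
    (hν : ν ≤ 1) {lam Θ M : ℝ} (hlam : 0 < lam) (hΘ : 0 ≤ Θ) (hM : 0 ≤ M) {r s : ℕ → ℕ → ℝ}
    (hr : ChildDominated l d r) (hs : ChildDominated l d s) {j : ℕ} (hj : j ≤ d)
    (hrs : ∀ k < levN l j, r j k ≤ lam * s j k)
    (hcomp : ∀ k < levN l j, ∀ k' < levN l j, s j k ≤ M * s j k')
    (hparam : Δ * M ^ p ≤ ν * Θ ^ p / (2 * lam ^ p))
    (hroot : (1 - ν / 2) * Θ ^ p * levelWeight l p (d + 1) * levelSumPow l s p (d + 1)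
      < r 0 0 ^ p) :
    (#{k ∈ range (levN l j) | r j k ^ p ≤
        (1 - ν) * Θ ^ p * (l (j + 1) : ℝ) ^ (p - 1) * childSumPow l s p j k} : ℝ)
      < (1 - Δ) * (levN l j : ℝ) := by
  have hrpow : ∀ i ∈ range (levN l j), ∀ k ∈ range (levN l j),
      r j i ^ p ≤ (lam * M) ^ p * s j k ^ p := by
    intro i hi k hk
    have hi := mem_range.1 hi
    have hk := mem_range.1 hk
    exact rpow_le_mul_rpow_of_le_mul_of_le_mul (hr.nonneg j (by lia) i hi)
      (hs.nonneg j (by lia) k hk) hlam.le hM (by linarith) (hrs i hi) (hcomp i hi k hk)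
  have hcoef : Δ * (lam * M) ^ p ≤ ν / 2 * Θ ^ p := by
    rw [le_div_iff₀ (by positivity)] at hparam
    rw [Real.mul_rpow hlam.le hM]
    linarith
  have hminor : Δ * ((lam * M) ^ p * levelSumPow l s p j)
      ≤ ν / 2 * Θ ^ p * ((l (j + 1) : ℝ) ^ (p - 1) * levelSumPow l s p (j + 1)) := by
    rw [← mul_assoc]
    exact mul_le_mul hcoef (hs.levelSumPow_le_succ hp hj) (hs.levelSumPow_nonneg (by lia))
      ((by positivity : 0 ≤ Δ * (lam * M) ^ p).trans hcoef)
  have hsum : ∑ k ∈ range (levN l j),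
        (1 - ν) * Θ ^ p * (l (j + 1) : ℝ) ^ (p - 1) * childSumPow l s p j k
      + Δ * ∑ k ∈ range (levN l j), (lam * M) ^ p * s j k ^ p
      < ∑ k ∈ range (levN l j), r j k ^ p := by
    rw [← mul_sum, ← mul_sum, sum_childSumPow, ← levelSumPow, ← levelSumPow]
    have hlevel := hr.lt_levelSumPow_of_lt_root hp hs
      (mul_nonneg (by linarith) (Real.rpow_nonneg hΘ p)) hj hroot
    linarith
  have hw : ∀ k ∈ range (levN l j),
      0 ≤ (1 - ν) * Θ ^ p * (l (j + 1) : ℝ) ^ (p - 1) * childSumPow l s p j k := by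
    intro k hk
    have := childSumPow_nonneg (p := p) (hs.nonneg (j + 1) (by lia)) (mem_range.1 hk)
    have := sub_nonneg.2 hν
    positivity
  have hg : 0 ≤ ∑ k ∈ range (levN l j), (lam * M) ^ p * s j k ^ p := by
    rw [← mul_sum]
    exact mul_nonneg (by positivity) (hs.levelSumPow_nonneg (by lia))
  simpa only [card_range] using card_filter_le_lt_of_sum_add_lt_sum hw hg hrpow hsum

open Classical in
/-- Lemma 3.5: on each level `j < d`, fewer than `(1−Δ)|Λ_j|` of the nodes fail the
comparison `r_I^p > (1−ν)Θ^p l_{j+1}^{p−1} ∑_{J⁻=I} s_J^p`. -/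
theorem YtoX_lemma (p : ℝ) (hp : 1 < p) (d : ℕ) (l : ℕ → ℕ)
    (hl : ∀ i ∈ Finset.Icc 1 (d + 1), 0 < l i)
    (Δ ν : ℝ) (hΔ : 0 < Δ) (hΔ1 : Δ < 1) (hν : 0 < ν) (hν1 : ν < 1)
    (lam Θ : ℝ) (hlam : 0 < lam) (hΘ : 0 < Θ) (M : ℝ) (hM : 1 < M)
    (r s : ℕ → ℕ → ℝ)
    (hnonneg : ∀ j ≤ d + 1, ∀ k < levN l j, 0 ≤ r j k ∧ 0 ≤ s j k)
    (h1 : ∀ j ≤ d + 1, ∀ k < levN l j, r j k ≤ lam * s j k)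
    (h2 : ∀ j ≤ d, ∀ k < levN l j, r j k ≤ childSum l r j k ∧ s j k ≤ childSum l s j k)
    (h3 : ∀ j ≤ d, ∀ k < levN l j, ∀ k' < levN l j, s j k ≤ M * s j k')
    (h4 : Δ * M ^ p ≤ ν * Θ ^ p / (2 * lam ^ p))
    (h5 : r 0 0 ^ p > (1 - ν / 2) * Θ ^ p *
      (∏ i ∈ Finset.Icc 1 (d + 1), (l i : ℝ) ^ (p - 1)) *
      ∑ k ∈ Finset.range (levN l (d + 1)), s (d + 1) k ^ p) :
    ∀ j < d,
      ((((Finset.range (levN l j)).filter fun k =>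
          r j k ^ p ≤ (1 - ν) * Θ ^ p * (l (j + 1) : ℝ) ^ (p - 1) * childSumPow l s p j k).card : ℝ))
        < (1 - Δ) * (levN l j : ℝ) := by
  have hr : ChildDominated l d r :=
    ⟨fun j hj k hk ↦ (hnonneg j hj k hk).1, fun j hj k hk ↦ (h2 j hj k hk).1⟩
  have hs : ChildDominated l d s :=
    ⟨fun j hj k hk ↦ (hnonneg j hj k hk).2, fun j hj k hk ↦ (h2 j hj k hk).2⟩
  exact fun j hj ↦ YtoX_lemma_general hp.le hΔ.le hν1.le hlam hΘ.le (zero_le_one.trans hM.le)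
    hr hs hj.le (h1 j (by lia)) (h3 j hj.le) h4 h5
end
end

section
/- Let 𝓕 be a uniformly Lipschitz family of maps between metric spaces. Then for all k, l ∈ ℕ, a_{kl}(𝓕) ≤ a_l(𝓕). More precisely, for any metric spaces (X,d_X),(Y,d_Y), any map F : X → Y, and any a > 0 such that every g : 2^l → X satisfies 𝔼 ϱ_Y^g(δ,−δ) ≤ a·Lip(g), every f : 2^{kl} → X satisfies 𝔼 ϱ_Y^f(ε,−ε) ≤ a·Lip(f). -/
/-!
Colour the `kl` coordinates with `l` colours, each used `k` times, and let `δ ∈ 2^l` act on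
`ε ∈ 2^{kl}` by multiplying every coordinate by the sign that `δ` gives to its colour. For fixed `ε`
the orbit map `δ ↦ ε · δ` is an isometric embedding `2^l → 2^{kl}`, thanks to the normalization of
the metrics, and it commutes with the antipodal map. Hence `f : 2^{kl} → X` restricts on the orbit
of `ε` to a map on `2^l` whose Lipschitz constant is at most `Lip(f)` and to which the bound on
`2^l` applies. Each `δ` acts bijectively, so averaging these bounds over `ε` recovers the average
over `2^{kl}`.

Passing to the infima needs some admissible constant for `a_l(𝓕)`, since `sInf ∅ = 0`: as
`∂(ε, -ε) = 1`, the uniform Lipschitz constant of `𝓕` is one.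
-/

open Finset

noncomputable section

/-- Normalized Hamming distance on the cube `{±1}^n` (modeled as `Fin n → Bool`). -/
def hdist (n : ℕ) (ε δ : Fin n → Bool) : ℝ :=
  ((Finset.univ.filter fun i => ε i ≠ δ i).card : ℝ) / n

/-- `-ε`: flip all coordinates. -/
def negCube {n : ℕ} (ε : Fin n → Bool) : Fin n → Bool := fun i => !(ε i)

/-- `d_i ε`: flip the `i`-th coordinate. -/
def flipCoord {n : ℕ} (i : Fin n) (ε : Fin n → Bool) : Fin n → Bool :=
  Function.update ε i (!(ε i))

/-- Expectation with respect to the uniform probability measure on the cube. -/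
def cubeE (n : ℕ) (Φ : (Fin n → Bool) → ℝ) : ℝ :=
  (∑ ε : Fin n → Bool, Φ ε) / 2 ^ n

/-- Lipschitz constant of a map from the cube (with metric `hdist`) into a metric space,
with the convention `0 / 0 = 0`. -/
def cubeLip {n : ℕ} {X : Type} [MetricSpace X] (f : (Fin n → Bool) → X) : ℝ :=
  sSup { r : ℝ | ∃ ε δ, r = dist (f ε) (f δ) / hdist n ε δ }

/-- A map between (bundled) metric spaces. -/
structure MetricMap where
  X : Type
  Y : Type
  mX : MetricSpace X
  mY : MetricSpace Y
  F : X → Y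

attribute [instance] MetricMap.mX MetricMap.mY

/-- `a_n(𝓕)`: infimum of those `a > 0` such that for each `F : X → Y` in `𝓕` and each
`f : 2^n → X`, `𝔼 ϱ_Y^f(ε,−ε) ≤ a·Lip(f)`. -/
def aConst (𝓕 : Set MetricMap) (n : ℕ) : ℝ :=
  sInf { a : ℝ | 0 < a ∧ ∀ G ∈ 𝓕, ∀ f : (Fin n → Bool) → G.X,
    cubeE n (fun ε => dist (G.F (f ε)) (G.F (f (negCube ε)))) ≤ a * cubeLip f }

/-- `b_{p,n}(𝓕)`: infimum of those `b > 0` such that for each `F : X → Y` in `𝓕` and each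
`f : 2^n → X`, `𝔼 ϱ_Y^f(ε,−ε)^p ≤ b^p n^{p−1} ∑_i 𝔼 ϱ_X^f(ε,d_iε)^p`. -/
def bConst (𝓕 : Set MetricMap) (p : ℝ) (n : ℕ) : ℝ :=
  sInf { b : ℝ | 0 < b ∧ ∀ G ∈ 𝓕, ∀ f : (Fin n → Bool) → G.X,
    cubeE n (fun ε => dist (G.F (f ε)) (G.F (f (negCube ε))) ^ p)
      ≤ b ^ p * (n : ℝ) ^ (p - 1) *
        ∑ i : Fin n, cubeE n (fun ε => dist (f ε) (f (flipCoord i ε)) ^ p) }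

open scoped BigOperators

section Expectation

lemma cubeE_eq_expect (n : ℕ) (Φ : (Fin n → Bool) → ℝ) : cubeE n Φ = 𝔼 ε, Φ ε := by
  simp [cubeE, Fintype.expect_eq_sum_div_card]

lemma cubeE_le_of_forall_le {n : ℕ} {Φ : (Fin n → Bool) → ℝ} {c : ℝ} (h : ∀ ε, Φ ε ≤ c) :
    cubeE n Φ ≤ c := by
  rw [cubeE_eq_expect]
  exact expect_le univ_nonempty fun ε _ => h ε

lemma cubeE_cubeE_comp_of_bijective {m n : ℕ} {T : (Fin m → Bool) → (Fin n → Bool) → Fin m → Bool}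
    (hT : ∀ δ, Function.Bijective (T · δ)) (Φ : (Fin m → Bool) → ℝ) :
    cubeE m (fun ε => cubeE n fun δ => Φ (T ε δ)) = cubeE m Φ := by
  simp only [cubeE_eq_expect]
  calc 𝔼 ε, 𝔼 δ, Φ (T ε δ) = 𝔼 δ, 𝔼 ε, Φ (T ε δ) := expect_comm ..
    _ = 𝔼 _δ : Fin n → Bool, 𝔼 ε, Φ ε :=
      expect_congr rfl fun δ _ => Fintype.expect_bijective (T · δ) (hT δ) _ _ fun _ => rfl
    _ = 𝔼 ε, Φ ε := Fintype.expect_const _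

end Expectation

section Hamming

lemma hdist_eq_hammingDist_div (n : ℕ) (ε δ : Fin n → Bool) :
    hdist n ε δ = hammingDist ε δ / n := rfl

lemma hdist_negCube {n : ℕ} (hn : 0 < n) (ε : Fin n → Bool) : hdist n ε (negCube ε) = 1 := by
  simp [hdist, negCube, hn.ne']

lemma card_eq_mul_card_of_card_fiber {ι κ : Type*} [Fintype ι] [Fintype κ] [DecidableEq κ]
    {π : ι → κ} {k : ℕ} (hπ : ∀ j, #{i | π i = j} = k) :
    Fintype.card ι = k * Fintype.card κ := by
  rw [← card_univ, card_eq_sum_card_fiberwise (f := π) (t := univ) (by simp)]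
  simp [hπ, mul_comm]

lemma hammingDist_comp_right_of_card_fiber {ι κ α : Type*} [Fintype ι] [Fintype κ] [DecidableEq κ]
    [DecidableEq α] {π : ι → κ} {k : ℕ} (hπ : ∀ j, #{i | π i = j} = k) (x y : κ → α) :
    hammingDist (x ∘ π) (y ∘ π) = k * hammingDist x y := by
  have hfiber : ∀ j ∈ ({j | x j ≠ y j} : Finset κ),
      #{i ∈ ({i | x (π i) ≠ y (π i)} : Finset ι) | π i = j} = k := by
    intro j hj
    rw [← hπ j, filter_filter]
    congr 1
    grind
  calc hammingDist (x ∘ π) (y ∘ π)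
      = ∑ j with x j ≠ y j, #{i ∈ ({i | x (π i) ≠ y (π i)} : Finset ι) | π i = j} :=
        card_eq_sum_card_fiberwise fun i hi => by simpa using hi
    _ = k * hammingDist x y := by rw [sum_const_nat hfiber, mul_comm]; rfl

lemma card_filter_modNat_eq {k l : ℕ} (j : Fin l) : #{i : Fin (k * l) | i.modNat = j} = k := by
  calc #{i : Fin (k * l) | i.modNat = j}
      = #((univ : Finset (Fin k)) ×ˢ {j}) := card_equiv finProdFinEquiv.symm (by simp [eq_comm])
    _ = k := by simp

end Hamming

section Lipschitz

variable {m n : ℕ} {X : Type} [MetricSpace X]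

lemma div_hdist_le_cubeLip (f : (Fin n → Bool) → X) (ε δ : Fin n → Bool) :
    dist (f ε) (f δ) / hdist n ε δ ≤ cubeLip f := by
  have hfin : (Set.range fun p : (Fin n → Bool) × (Fin n → Bool) =>
      dist (f p.1) (f p.2) / hdist n p.1 p.2).Finite := Set.finite_range _
  refine le_csSup (hfin.subset ?_).bddAbove ⟨ε, δ, rfl⟩
  rintro _ ⟨ε, δ, rfl⟩
  exact ⟨(ε, δ), rfl⟩

lemma dist_negCube_le_cubeLip (hn : 0 < n) (f : (Fin n → Bool) → X) (ε : Fin n → Bool) :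
    dist (f ε) (f (negCube ε)) ≤ cubeLip f := by
  simpa only [hdist_negCube hn, div_one] using div_hdist_le_cubeLip f ε (negCube ε)

lemma cubeLip_comp_le_of_hdist_eq {φ : (Fin n → Bool) → Fin m → Bool}
    (hφ : ∀ δ δ', hdist m (φ δ) (φ δ') = hdist n δ δ') (f : (Fin m → Bool) → X) :
    cubeLip (f ∘ φ) ≤ cubeLip f := by
  refine csSup_le ⟨_, fun _ => true, fun _ => true, rfl⟩ ?_
  rintro _ ⟨δ, δ', rfl⟩
  rw [← hφ]
  exact div_hdist_le_cubeLip f (φ δ) (φ δ')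

end Lipschitz

section Twist

variable {m n : ℕ} (π : Fin m → Fin n)

/-- The point `ε · δ` of `2^m` obtained by letting `δ ∈ 2^n` act on `ε ∈ 2^m` through the colouring
`π` of the coordinates: the `i`-th sign of `ε` is multiplied by the sign `δ (π i)`. Multiplication
of signs is `xor` in the Boolean model. -/
def twist (ε : Fin m → Bool) (δ : Fin n → Bool) : Fin m → Bool :=
  fun i => xor (ε i) (δ (π i))

lemma twist_negCube (ε : Fin m → Bool) (δ : Fin n → Bool) :
    twist π ε (negCube δ) = negCube (twist π ε δ) := by
  funext i
  simp [twist, negCube]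

lemma twist_involutive (δ : Fin n → Bool) : Function.Involutive (twist π · δ) := by
  intro ε
  funext i
  simp [twist]

variable {π}

lemma hdist_twist {k : ℕ} (hk : 0 < k) (hπ : ∀ j, #{i | π i = j} = k) (ε : Fin m → Bool)
    (δ δ' : Fin n → Bool) : hdist m (twist π ε δ) (twist π ε δ') = hdist n δ δ' := by
  have hm : m = k * n := by simpa using card_eq_mul_card_of_card_fiber hπ
  have horbit : hammingDist (twist π ε δ) (twist π ε δ') = k * hammingDist δ δ' := by
    rw [← hammingDist_comp_right_of_card_fiber hπ]
    exact hammingDist_comp (fun i => xor (ε i)) fun _ _ _ => Bool.xor_right_inj.mp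
  rw [hdist_eq_hammingDist_div, hdist_eq_hammingDist_div, horbit, hm, Nat.cast_mul,
    Nat.cast_mul, mul_div_mul_left _ _ (by positivity)]

end Twist

section AntipodalBound

variable {X : Type} [MetricSpace X] {ρ : X → X → ℝ} {a : ℝ} {m n : ℕ}

/-- The inequality defining the constants `a_n`: `𝔼 ρ(f(ε), f(-ε)) ≤ a · Lip(f)` for every
`f : 2^n → X`. A map `F : X → Y` is encoded by the kernel `ρ(x, y) = d_Y(F(x), F(y))`. -/
def HasAntipodalBound (n : ℕ) (ρ : X → X → ℝ) (a : ℝ) : Prop :=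
  ∀ f : (Fin n → Bool) → X, cubeE n (fun ε => ρ (f ε) (f (negCube ε))) ≤ a * cubeLip f

lemma aConst_eq_sInf_hasAntipodalBound (𝓕 : Set MetricMap) (n : ℕ) :
    aConst 𝓕 n = sInf {a : ℝ | 0 < a ∧ ∀ G ∈ 𝓕,
      HasAntipodalBound n (fun x y => dist (G.F x) (G.F y)) a} := rfl

lemma hasAntipodalBound_of_le_mul_dist (hn : 0 < n) (ha : 0 ≤ a)
    (hρ : ∀ x y, ρ x y ≤ a * dist x y) : HasAntipodalBound n ρ a := fun f =>
  cubeE_le_of_forall_le fun ε =>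
    (hρ _ _).trans (mul_le_mul_of_nonneg_left (dist_negCube_le_cubeLip hn f ε) ha)

lemma HasAntipodalBound.of_card_fiber {π : Fin m → Fin n} {k : ℕ} (hk : 0 < k)
    (hπ : ∀ j, #{i | π i = j} = k) (ha : 0 ≤ a) (h : HasAntipodalBound n ρ a) :
    HasAntipodalBound m ρ a := by
  intro f
  have horbit (ε : Fin m → Bool) :
      cubeE n (fun δ => ρ (f (twist π ε δ)) (f (negCube (twist π ε δ)))) ≤ a * cubeLip f := by
    simp only [← twist_negCube]
    calc cubeE n (fun δ => ρ (f (twist π ε δ)) (f (twist π ε (negCube δ))))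
        ≤ a * cubeLip (f ∘ twist π ε) := h (f ∘ twist π ε)
      _ ≤ a * cubeLip f :=
        mul_le_mul_of_nonneg_left (cubeLip_comp_le_of_hdist_eq (hdist_twist hk hπ ε) f) ha
  rw [← cubeE_cubeE_comp_of_bijective fun δ => (twist_involutive π δ).bijective]
  exact cubeE_le_of_forall_le horbit

lemma HasAntipodalBound.mul_left {k l : ℕ} (hk : 0 < k) (ha : 0 ≤ a)
    (h : HasAntipodalBound l ρ a) : HasAntipodalBound (k * l) ρ a :=
  h.of_card_fiber hk card_filter_modNat_eq ha

end AntipodalBound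

/-- `a_{kl}(𝓕) ≤ a_l(𝓕)`, together with the precise pointwise statement. -/
theorem aConst_mul_le (𝓕 : Set MetricMap) (lam : ℝ) (hlam : 0 < lam)
    (hLip : ∀ G ∈ 𝓕, ∀ x y : G.X, dist (G.F x) (G.F y) ≤ lam * dist x y)
    (k l : ℕ) (hk : 0 < k) (hl : 0 < l) :
    aConst 𝓕 (k * l) ≤ aConst 𝓕 l ∧
    ∀ (X Y : Type) [MetricSpace X] [MetricSpace Y] (F : X → Y) (a : ℝ), 0 < a →
      (∀ g : (Fin l → Bool) → X,
        cubeE l (fun δ => dist (F (g δ)) (F (g (negCube δ)))) ≤ a * cubeLip g) →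
      ∀ f : (Fin (k * l) → Bool) → X,
        cubeE (k * l) (fun ε => dist (F (f ε)) (F (f (negCube ε)))) ≤ a * cubeLip f := by
  constructor
  · rw [aConst_eq_sInf_hasAntipodalBound, aConst_eq_sInf_hasAntipodalBound]
    refine csInf_le_csInf ⟨0, fun a ha => ha.1.le⟩ ⟨lam, hlam, fun G hG => ?_⟩
      fun a ⟨ha, hbound⟩ => ⟨ha, fun G hG => (hbound G hG).mul_left hk ha.le⟩
    exact hasAntipodalBound_of_le_mul_dist hl hlam.le (hLip G hG)
  · intro X Y _ _ F a ha hbound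
    have hbound_l : HasAntipodalBound l (fun x y => dist (F x) (F y)) a := hbound
    exact hbound_l.mul_left hk ha.le
end
end
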